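/- arXiv:0801.2830 — 3 statements merged into one kernel-verified Lean document; each statement's English description precedes it below -/
import Mathlib

section
/- The kernel of ρ equals the ideal of ℂ[X_{j,a} : (j,a) ∈ I] generated by the l elements ∏_{j=1}^{n_a+1} X_{j,a} − q_a, a = 1, …, l (the quantum Stanley–Reisner relations of ℙ^{n_1} × ⋯ × ℙ^{n_l}); in particular ρ induces an isomorphism of ℂ-algebras ℂ[X_{j,a} : (j,a) ∈ I]/⟨∏_{j=1}^{n_a+1} X_{j,a} − q_a : a = 1, …, l⟩ ≅ ℂ[ℤ^N]. -/
/-- The primitive ray generators of the fan of `ℙ^{n₁} × ⋯ × ℙ^{n_l}`, indexed by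
`I = {(j,a) : 1 ≤ a ≤ l, 1 ≤ j ≤ n_a + 1}` (encoded as the sigma type
`Σ a : Fin l, Fin (n a + 1)`): in the `a`-th block, `v_{j,a}` is the `j`-th standard
basis vector for `j ≤ n_a`, and `v_{n_a+1,a} = −(e₁ + ⋯ + e_{n_a})`. -/
def rayGen {l : ℕ} (n : Fin l → ℕ) (p : Σ a : Fin l, Fin (n a + 1)) :
    ∀ a : Fin l, Fin (n a) → ℤ := fun b m =>
  if b = p.1 then
    (if (p.2 : ℕ) = n p.1 then -1 else if (m : ℕ) = (p.2 : ℕ) then 1 else 0)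
  else 0

theorem sum_rayGen {l : ℕ} (n : Fin l → ℕ) (a : Fin l) :
    ∑ j : Fin (n a + 1), rayGen n ⟨a, j⟩ = 0 := by
  funext b m
  simp only [Finset.sum_apply, Pi.zero_apply]
  by_cases hb : b = a
  · subst hb
    rw [Fin.sum_univ_castSucc]
    have h : ∀ i : Fin (n b), rayGen n ⟨b, i.castSucc⟩ b m = if i = m then 1 else 0 := by
      intro i
      have := i.isLt
      simp only [rayGen, Fin.val_castSucc, if_true]
      rw [if_neg (by omega)]
      simp only [Fin.ext_iff, eq_comm]
    simp only [h]
    simp [rayGen]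
  · simp [rayGen, hb]

theorem rayGen_castSucc {l : ℕ} (n : Fin l → ℕ) (a : Fin l) (i : Fin (n a)) :
    rayGen n ⟨a, i.castSucc⟩ = Pi.single a (Pi.single i 1) := by
  funext b m
  have := i.isLt
  by_cases hb : b = a
  · subst hb
    simp only [rayGen, Fin.val_castSucc, if_true, Pi.single_eq_same]
    rw [if_neg (by omega)]
    simp only [Pi.single_apply, Fin.ext_iff]
  · simp [rayGen, hb]

theorem exists_lift {l : ℕ} (n : Fin l → ℕ) (lam : (Σ a : Fin l, Fin (n a + 1)) → ℝ)
    {A : Type*} [CommRing A] [Algebra ℂ A] (x : (Σ a : Fin l, Fin (n a + 1)) → A)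
    (hx : ∀ a, ∏ j, x ⟨a, j⟩
      = algebraMap ℂ A ((Real.exp (∑ j : Fin (n a + 1), lam ⟨a, j⟩) : ℝ) : ℂ)) :
    ∃ σ : AddMonoidAlgebra ℂ (∀ a : Fin l, Fin (n a) → ℤ) →ₐ[ℂ] A,
      ∀ p, σ (AddMonoidAlgebra.single (rayGen n p) ((Real.exp (lam p) : ℝ) : ℂ)) = x p := by
  let e : (Σ a : Fin l, Fin (n a + 1)) → A :=
    fun p => algebraMap ℂ A ((Real.exp (lam p) : ℝ) : ℂ)
  let einv : (Σ a : Fin l, Fin (n a + 1)) → A :=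
    fun p => algebraMap ℂ A ((Real.exp (-lam p) : ℝ) : ℂ)
  have hee : ∀ p, e p * einv p = 1 := by
    intro p
    simp only [e, einv]
    rw [← map_mul, ← Complex.ofReal_mul, ← Real.exp_add]
    simp
  let y : (Σ a : Fin l, Fin (n a + 1)) → A := fun p => einv p * x p
  have hy : ∀ a, ∏ j, y ⟨a, j⟩ = 1 := by
    intro a
    simp only [y]
    rw [Finset.prod_mul_distrib, hx]
    have : algebraMap ℂ A ((Real.exp (∑ j : Fin (n a + 1), lam ⟨a, j⟩) : ℝ) : ℂ)
        = ∏ j, e ⟨a, j⟩ := by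
      simp only [e]
      rw [Real.exp_sum, Complex.ofReal_prod, map_prod]
    rw [this, ← Finset.prod_mul_distrib]
    simp [mul_comm (einv _), hee]
  have hyu : ∀ p, IsUnit (y p) := by
    rintro ⟨a, j⟩
    have : y ⟨a, j⟩ ∣ ∏ j, y ⟨a, j⟩ := Finset.dvd_prod_of_mem (fun j => y ⟨a, j⟩) (Finset.mem_univ j)
    rw [hy] at this
    exact isUnit_of_dvd_one this
  let u : (Σ a : Fin l, Fin (n a + 1)) → Aˣ := fun p => (hyu p).unit
  have huy : ∀ p, (u p : A) = y p := fun p => rfl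
  have hu : ∀ a, ∏ j, u ⟨a, j⟩ = 1 := by
    intro a
    ext
    rw [Units.coe_prod]
    simp only [huy, hy, Units.val_one]
  let φ : Multiplicative (∀ a : Fin l, Fin (n a) → ℤ) →* Aˣ :=
    { toFun := fun v => ∏ a, ∏ m : Fin (n a), u ⟨a, m.castSucc⟩ ^ (v.toAdd a m)
      map_one' := by simp
      map_mul' := by
        intro v w
        simp [zpow_add, Finset.prod_mul_distrib] }
  have hφ1 : ∀ a (i : Fin (n a)),
      φ (Multiplicative.ofAdd (rayGen n ⟨a, i.castSucc⟩)) = u ⟨a, i.castSucc⟩ := by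
    intro a i
    simp only [φ, MonoidHom.coe_mk, OneHom.coe_mk, toAdd_ofAdd, rayGen_castSucc]
    rw [Finset.prod_eq_single a, Finset.prod_eq_single i]
    · simp
    · intro b _ hb
      simp [hb]
    · simp
    · intro b _ hb
      simp [hb]
    · simp
  have hφ : ∀ p, φ (Multiplicative.ofAdd (rayGen n p)) = u p := by
    rintro ⟨a, j⟩
    induction j using Fin.lastCases with
    | cast i => exact hφ1 a i
    | last =>
      have h1 : ∏ j, φ (Multiplicative.ofAdd (rayGen n ⟨a, j⟩)) = ∏ j, u ⟨a, j⟩ := by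
        rw [hu, ← map_prod, ← ofAdd_sum, sum_rayGen, ofAdd_zero, map_one]
      rw [Fin.prod_univ_castSucc, Fin.prod_univ_castSucc] at h1
      simp only [hφ1] at h1
      exact mul_left_cancel h1
  refine ⟨AddMonoidAlgebra.lift ℂ A _ ((Units.coeHom A).comp φ), fun p => ?_⟩
  rw [AddMonoidAlgebra.lift_single, MonoidHom.comp_apply, hφ, Units.coeHom_apply, huy,
    Algebra.smul_def]
  change e p * (einv p * x p) = x p
  rw [← mul_assoc, hee, one_mul]

/-- Let `ρ : ℂ[X_{j,a}] → ℂ[ℤ^N]` be the `ℂ`-algebra homomorphism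
sending `X_{j,a}` to `exp(λ_{j,a}) · single (v_{j,a})`.  Then the kernel of `ρ` equals
the ideal generated by the `l` quantum Stanley–Reisner relations
`∏_{j=1}^{n_a+1} X_{j,a} − q_a`, where `q_a = exp(Σ_j λ_{j,a})`; moreover `ρ` is
surjective, so it induces an isomorphism of `ℂ`-algebras
`ℂ[X_{j,a}]/⟨∏_j X_{j,a} − q_a : a⟩ ≅ ℂ[ℤ^N]`. -/
theorem stmt3 (l : ℕ) (hl : 1 ≤ l) (n : Fin l → ℕ) (hn : ∀ a, 1 ≤ n a)
    (lam : (Σ a : Fin l, Fin (n a + 1)) → ℝ)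
    (ρ : MvPolynomial (Σ a : Fin l, Fin (n a + 1)) ℂ →ₐ[ℂ]
      AddMonoidAlgebra ℂ (∀ a : Fin l, Fin (n a) → ℤ))
    (hρ : ∀ p, ρ (MvPolynomial.X p)
      = AddMonoidAlgebra.single (rayGen n p) ((Real.exp (lam p) : ℝ) : ℂ)) :
    RingHom.ker ρ.toRingHom
      = Ideal.span (Set.range fun a : Fin l =>
          (∏ j : Fin (n a + 1), MvPolynomial.X (⟨a, j⟩ : Σ a : Fin l, Fin (n a + 1)))
            - MvPolynomial.C ((Real.exp (∑ j : Fin (n a + 1), lam ⟨a, j⟩) : ℝ) : ℂ)) ∧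
    Function.Surjective ρ := by
  have hprod : ∀ (s : Finset (Σ a : Fin l, Fin (n a + 1))),
      ρ (∏ p ∈ s, MvPolynomial.X p) = AddMonoidAlgebra.single (∑ p ∈ s, rayGen n p)
        ((Real.exp (∑ p ∈ s, lam p) : ℝ) : ℂ) := by
    intro s
    induction s using Finset.cons_induction with
    | empty =>
      rw [Finset.prod_empty, map_one]
      simp [AddMonoidAlgebra.one_def]
    | cons p s hp ih =>
      rw [Finset.prod_cons, map_mul, ih, hρ, AddMonoidAlgebra.single_mul_single,
        Finset.sum_cons, Finset.sum_cons, Real.exp_add, Complex.ofReal_mul]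
  refine ⟨le_antisymm ?_ ?_, ?_⟩
  · intro f hf
    set I := Ideal.span (Set.range fun a : Fin l =>
          (∏ j : Fin (n a + 1), MvPolynomial.X (⟨a, j⟩ : Σ a : Fin l, Fin (n a + 1)))
            - MvPolynomial.C ((Real.exp (∑ j : Fin (n a + 1), lam ⟨a, j⟩) : ℝ) : ℂ)) with hI
    obtain ⟨σ, hσ⟩ := exists_lift n lam (A := MvPolynomial (Σ a : Fin l, Fin (n a + 1)) ℂ ⧸ I)
      (fun p => Ideal.Quotient.mkₐ ℂ I (MvPolynomial.X p)) (by
        intro a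
        rw [← map_prod, ← (Ideal.Quotient.mkₐ ℂ I).commutes]
        exact Ideal.Quotient.eq.2 (Ideal.subset_span ⟨a, rfl⟩))
    have hcomp : σ.comp ρ = Ideal.Quotient.mkₐ ℂ I := by
      apply MvPolynomial.algHom_ext
      intro p
      rw [AlgHom.comp_apply, hρ, hσ]
    have hf0 : ρ f = 0 := hf
    have : Ideal.Quotient.mkₐ ℂ I f = 0 := by
      rw [← hcomp, AlgHom.comp_apply, hf0, map_zero]
    exact Ideal.Quotient.eq_zero_iff_mem.1 this
  · rw [Ideal.span_le]
    rintro _ ⟨a, rfl⟩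
    change ρ _ = 0
    have h := hprod (Finset.univ.map (Function.Embedding.sigmaMk a))
    simp only [Finset.prod_map, Finset.sum_map, Function.Embedding.sigmaMk_apply,
      sum_rayGen] at h
    rw [map_sub, h, ← MvPolynomial.algebraMap_eq, ρ.commutes]
    simp
  · let S : AddSubmonoid (∀ a : Fin l, Fin (n a) → ℤ) :=
      { carrier := {v | AddMonoidAlgebra.single v (1 : ℂ) ∈ ρ.range}
        zero_mem' := ρ.range.one_mem
        add_mem' := by
          intro v w hv hw
          have := ρ.range.mul_mem hv hw
          rw [AddMonoidAlgebra.single_mul_single, mul_one] at this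
          exact this }
    have hSmem : ∀ v, v ∈ S → ∀ c : ℂ, AddMonoidAlgebra.single v c ∈ ρ.range := by
      intro v hv c
      have := ρ.range.smul_mem hv c
      rwa [AddMonoidAlgebra.smul_single, smul_eq_mul, mul_one] at this
    have hray : ∀ p, rayGen n p ∈ S := by
      intro p
      have h1 : ρ (MvPolynomial.X p) ∈ ρ.range := ⟨_, rfl⟩
      have := ρ.range.smul_mem h1 ((Real.exp (lam p) : ℝ) : ℂ)⁻¹
      rw [hρ, AddMonoidAlgebra.smul_single, smul_eq_mul, inv_mul_cancel₀
        (Complex.ofReal_ne_zero.2 (Real.exp_ne_zero _))] at this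
      exact this
    have hneg : ∀ p, -rayGen n p ∈ S := by
      rintro ⟨a, j⟩
      have h := sum_rayGen n a
      rw [← Finset.add_sum_erase _ _ (Finset.mem_univ j)] at h
      rw [← eq_neg_of_add_eq_zero_right h]
      exact S.sum_mem fun i _ => hray _
    have hz : ∀ p (k : ℤ), k • rayGen n p ∈ S := by
      intro p k
      obtain ⟨m, rfl | rfl⟩ := k.eq_nat_or_neg
      · rw [natCast_zsmul]
        exact S.nsmul_mem (hray p) m
      · rw [neg_smul, natCast_zsmul, ← smul_neg]
        exact S.nsmul_mem (hneg p) m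
    have hall : ∀ v, v ∈ S := by
      intro v
      have hv : v = ∑ a, ∑ m : Fin (n a), v a m • rayGen n ⟨a, m.castSucc⟩ := by
        funext b i
        simp only [Finset.sum_apply, Pi.smul_apply, rayGen_castSucc]
        rw [Finset.sum_eq_single b, Finset.sum_eq_single i]
        · simp
        · intro m _ hm
          simp [hm.symm]
        · simp
        · intro a _ ha
          simp [ha.symm]
        · simp
      rw [hv]
      exact S.sum_mem fun a _ => S.sum_mem fun m _ => hz _ _
    intro f
    change f ∈ ρ.range
    induction f using AddMonoidAlgebra.induction_linear with
    | zero => exact ρ.range.zero_mem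
    | add f g hf hg => exact ρ.range.add_mem hf hg
    | single v c => exact hSmem v (hall v) c
end

section
/- For all x, y ∈ ℝ^n, the family over w ∈ ℤ^n with terms c_w · z(x,y)^w has sum exp(W(z(x,y))) = ∏_{i=1}^d exp(e^{λ_i} z(x,y)^{v_i}); that is, the fiberwise Fourier series Σ_{w ∈ ℤ^n} Φ(x, w) e^{−√−1⟨y,w⟩} of the disc-counting function Φ(x, w) = c_w e^{−⟨x,w⟩} converges unconditionally to the exponential of the superpotential: the SYZ mirror transformation of Φ is e^W. -/
theorem hasSum_prod_exp (d : ℕ) (a : Fin d → ℂ) :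
    HasSum (fun k : Fin d → ℕ => ∏ i, (a i ^ k i / (Nat.factorial (k i) : ℂ)))
      (Complex.exp (∑ i, a i)) := by
  induction d with
  | zero =>
    simp
  | succ d ih =>
    have h1 : HasSum (fun m : ℕ => a 0 ^ m / (Nat.factorial m : ℂ)) (Complex.exp (a 0)) := by
      rw [Complex.exp_eq_exp_ℂ]
      exact NormedSpace.expSeries_div_hasSum_exp (a 0)
    have h2 := ih (fun i => a i.succ)
    have n1 := h1.summable.norm
    have n2 := h2.summable.norm
    have h5 := summable_mul_of_summable_norm n1 n2
    have h3 := HasSum.mul h1 h2 h5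
    rw [Fin.sum_univ_succ, Complex.exp_add, ← (Fin.consEquiv (fun _ : Fin (d + 1) => ℕ)).hasSum_iff]
    refine Eq.mp (congrArg (fun f => HasSum f _) ?_) h3
    funext p
    simp [Fin.prod_univ_succ, Fin.consEquiv]
    rw [div_mul_div_comm]

/-- With `z_j = exp(−x_j − √−1 y_j)` and
`c_w = Σ_{k ∈ ℕ^d : Σᵢ kᵢ vᵢ = w} exp(λ₁k₁ + ⋯ + λ_d k_d)/(k₁! ⋯ k_d!)`:
for all `x, y ∈ ℝⁿ`, the family over `w ∈ ℤⁿ` with terms `c_w · z^w` has sum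
`exp(W(z)) = ∏ᵢ exp(e^{λᵢ} z^{vᵢ})`, where `W(z) = Σᵢ e^{λᵢ} z^{vᵢ}` is the
superpotential; that is, the fiberwise Fourier series of the disc-counting function
`Φ(x, w) = c_w e^{−⟨x,w⟩}` converges unconditionally to the exponential of the
superpotential: the SYZ mirror transformation of `Φ` is `e^W`. -/
theorem stmt6 (n d : ℕ) (hn : 1 ≤ n) (hd : 1 ≤ d)
    (v : Fin d → Fin n → ℤ) (lam : Fin d → ℝ) (x y : Fin n → ℝ) :
    HasSum (fun w : Fin n → ℤ =>
      (((∑' k : {k : Fin d → ℕ // ∑ i, k i • v i = w},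
          Real.exp (∑ i, (k.1 i : ℝ) * lam i) /
            ∏ i, (Nat.factorial (k.1 i) : ℝ)) : ℝ) : ℂ) *
        ∏ j, (Complex.exp (-(x j : ℂ) - Complex.I * (y j : ℂ))) ^ (w j))
      (Complex.exp (∑ i, ((Real.exp (lam i) : ℝ) : ℂ) *
        ∏ j, (Complex.exp (-(x j : ℂ) - Complex.I * (y j : ℂ))) ^ (v i j))) := by
  set z : Fin n → ℂ := fun j => Complex.exp (-(x j : ℂ) - Complex.I * (y j : ℂ)) with hz
  have hz0 : ∀ j, z j ≠ 0 := fun j => Complex.exp_ne_zero _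
  have key := hasSum_prod_exp d (fun i => ((Real.exp (lam i) : ℝ) : ℂ) * ∏ j, z j ^ (v i j))
  rw [← (Equiv.sigmaFiberEquiv (fun k : Fin d → ℕ => ∑ i, k i • v i)).hasSum_iff] at key
  refine key.sigma (fun w => ?_)
  have hs := key.summable.sigma_factor w
  have hterm : ∀ k : {k : Fin d → ℕ // ∑ i, k i • v i = w},
      (∏ i, ((((Real.exp (lam i) : ℝ) : ℂ) * ∏ j, z j ^ (v i j)) ^ k.1 i /
        (Nat.factorial (k.1 i) : ℂ))) =
      ((Real.exp (∑ i, (k.1 i : ℝ) * lam i) / ∏ i, (Nat.factorial (k.1 i) : ℝ) : ℝ) : ℂ) *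
        ∏ j, z j ^ (w j) := by
    rintro ⟨k, rfl⟩
    have e1 : ∏ j, z j ^ ((∑ i, k i • v i) j) = ∏ i, (∏ j, z j ^ (v i j)) ^ k i := by
      simp_rw [← Finset.prod_pow]
      rw [Finset.prod_comm]
      refine Finset.prod_congr rfl (fun j _ => ?_)
      rw [Finset.sum_apply]
      have : ∀ s : Finset (Fin d), z j ^ (∑ i ∈ s, (k i • v i) j) =
          ∏ i ∈ s, (z j ^ v i j) ^ k i := by
        intro s
        induction s using Finset.induction_on with
        | empty => simp
        | insert i s hi ih =>
          rw [Finset.sum_insert hi, Finset.prod_insert hi, zpow_add₀ (hz0 j), ih]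
          congr 1
          rw [← zpow_natCast, ← zpow_mul]
          congr 1
          simp [mul_comm]
      exact this _
    rw [e1, Real.exp_sum]
    simp_rw [Real.exp_nat_mul]
    push_cast
    rw [Finset.prod_div_distrib]
    simp_rw [mul_pow]
    rw [Finset.prod_mul_distrib]
    ring
  have h4 := hs.hasSum
  have h5 : (((∑' k : {k : Fin d → ℕ // ∑ i, k i • v i = w},
          Real.exp (∑ i, (k.1 i : ℝ) * lam i) /
            ∏ i, (Nat.factorial (k.1 i) : ℝ)) : ℝ) : ℂ) * ∏ j, z j ^ (w j) =
      ∑' k : {k : Fin d → ℕ // ∑ i, k i • v i = w},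
        (∏ i, ((((Real.exp (lam i) : ℝ) : ℂ) * ∏ j, z j ^ (v i j)) ^ k.1 i /
        (Nat.factorial (k.1 i) : ℂ))) := by
    rw [Complex.ofReal_tsum, ← tsum_mul_right]
    exact tsum_congr (fun k => (hterm k).symm)
  have h6 := h5.symm ▸ h4
  exact h6
end

section
/- For all x ∈ ℝ^n and all w ∈ ℤ^n, ∫_{[0,2π]^n} exp(Σ_{i=1}^d e^{λ_i} z(x,y)^{v_i}) · exp(√−1 Σ_{j=1}^n y_j w^j) dy = (2π)^n · c_w · exp(−⟨x, w⟩), the integral being with respect to Lebesgue measure on the cube [0,2π]^n; that is, the w-th fiberwise Fourier coefficient of e^W is the disc-counting function Φ(x, w) = c_w e^{−⟨x,w⟩}, so the inverse SYZ mirror transformation of e^W is Φ. -/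
open MeasureTheory

/-- The multivariable exponential series, together with absolute summability. -/
lemma multi_exp_aux (d : ℕ) (a : Fin d → ℂ) :
    Summable (fun k : Fin d → ℕ => ‖∏ i, (a i ^ k i / (Nat.factorial (k i) : ℂ))‖) ∧
    HasSum (fun k : Fin d → ℕ => ∏ i, (a i ^ k i / (Nat.factorial (k i) : ℂ)))
      (Complex.exp (∑ i, a i)) := by
  induction d with
  | zero =>
    refine ⟨Summable.of_finite, ?_⟩
    convert hasSum_unique (fun k : Fin 0 → ℕ => ∏ i, (a i ^ k i / (Nat.factorial (k i) : ℂ)))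
    simp
  | succ d ih =>
    obtain ⟨h1, h2⟩ := ih (fun i => a i.succ)
    have e1 : HasSum (fun m : ℕ => a 0 ^ m / (Nat.factorial m : ℂ)) (Complex.exp (a 0)) := by
      rw [Complex.exp_eq_exp_ℂ]; exact NormedSpace.expSeries_div_hasSum_exp (a 0)
    have e2 : Summable (fun m : ℕ => ‖a 0 ^ m / (Nat.factorial m : ℂ)‖) :=
      NormedSpace.norm_expSeries_div_summable (a 0)
    set f : ℕ → ℂ := fun m => a 0 ^ m / (Nat.factorial m : ℂ) with hf
    set g : (Fin d → ℕ) → ℂ :=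
      fun k => ∏ i : Fin d, (a i.succ ^ k i / (Nat.factorial (k i) : ℂ)) with hg
    have h1g : Summable (fun k => ‖g k‖) := h1
    have p1 : Summable (fun p : ℕ × (Fin d → ℕ) => ‖f p.1 * g p.2‖) :=
      Summable.mul_norm (f := f) (g := g) e2 h1g
    have p2 : HasSum (fun p : ℕ × (Fin d → ℕ) => f p.1 * g p.2)
        (Complex.exp (a 0) * Complex.exp (∑ i : Fin d, a i.succ)) :=
      HasSum.mul (f := f) (g := g) e1 h2 p1.of_norm
    have key : ∀ p : ℕ × (Fin d → ℕ),
        (∏ i, (a i ^ (Fin.consEquiv (fun _ => ℕ) p : Fin (d+1) → ℕ) i /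
          (Nat.factorial ((Fin.consEquiv (fun _ => ℕ) p : Fin (d+1) → ℕ) i) : ℂ)))
        = a 0 ^ p.1 / (Nat.factorial p.1 : ℂ) *
          ∏ i : Fin d, (a i.succ ^ p.2 i / (Nat.factorial (p.2 i) : ℂ)) := by
      intro p
      rw [Fin.prod_univ_succ]
      simp [Fin.consEquiv]
    constructor
    · rw [← (Fin.consEquiv (fun _ : Fin (d+1) => ℕ)).summable_iff]
      refine p1.congr fun p => ?_
      rw [Function.comp_apply, key]
    · rw [← (Fin.consEquiv (fun _ : Fin (d+1) => ℕ)).hasSum_iff, Fin.sum_univ_succ,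
        Complex.exp_add]
      convert p2 using 1
      funext p
      rw [Function.comp_apply, key]

lemma one_dim_aux (m : ℤ) :
    (∫ t in Set.Icc (0 : ℝ) (2 * Real.pi), Complex.exp (Complex.I * ((t : ℂ) * (m : ℂ))))
      = if m = 0 then ((2 * Real.pi : ℝ) : ℂ) else 0 := by
  have hpi := Real.pi_pos
  rw [integral_Icc_eq_integral_Ioc, ← intervalIntegral.integral_of_le (by positivity)]
  split_ifs with h
  · subst h; simp
  · have hc : Complex.I * (m : ℂ) ≠ 0 := mul_ne_zero Complex.I_ne_zero (by exact_mod_cast h)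
    have := integral_exp_mul_complex (a := 0) (b := 2 * Real.pi) hc
    have e : ∀ t : ℝ, Complex.I * ((t : ℂ) * (m : ℂ)) = Complex.I * (m : ℂ) * t := by
      intro t; ring
    simp_rw [e, this]
    have : Complex.exp (Complex.I * (m : ℂ) * ((2 * Real.pi : ℝ) : ℂ)) = 1 := by
      rw [Complex.exp_eq_one_iff]
      exact ⟨m, by push_cast; ring⟩
    rw [this]; simp

lemma multi_dim_aux (n : ℕ) (m : Fin n → ℤ) :
    (∫ y in Set.Icc (0 : Fin n → ℝ) (fun _ => 2 * Real.pi),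
      Complex.exp (Complex.I * ∑ j, ((y j : ℂ) * (m j : ℂ))))
      = if m = 0 then (((2 * Real.pi) ^ n : ℝ) : ℂ) else 0 := by
  have hs : Set.Icc (0 : Fin n → ℝ) (fun _ => 2 * Real.pi)
      = Set.univ.pi (fun _ => Set.Icc (0 : ℝ) (2 * Real.pi)) := by
    rw [Set.pi_univ_Icc]; rfl
  rw [hs, volume_pi, Measure.restrict_pi_pi]
  simp_rw [Finset.mul_sum, Complex.exp_sum]
  rw [integral_fintype_prod_eq_prod
    (fun j (t : ℝ) => Complex.exp (Complex.I * ((t : ℂ) * (m j : ℂ))))]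
  simp_rw [one_dim_aux]
  split_ifs with h
  · subst h; simp
  · obtain ⟨j, hj⟩ := Function.ne_iff.mp h
    exact Finset.prod_eq_zero (Finset.mem_univ j) (if_neg hj)


/-- With `z(x,y)_j = exp(−x_j − √−1 y_j)`,
`c_w = Σ_{k ∈ ℕ^d : Σᵢ kᵢ vᵢ = w} exp(λ₁k₁ + ⋯ + λ_d k_d)/(k₁! ⋯ k_d!)` and
`W(z) = Σᵢ e^{λᵢ} z^{vᵢ}`: for all `x ∈ ℝⁿ` and `w ∈ ℤⁿ`,
`∫_{[0,2π]ⁿ} exp(W(z(x,y))) · exp(√−1 ⟨y,w⟩) dy = (2π)ⁿ · c_w · exp(−⟨x,w⟩)`;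
that is, the `w`-th fiberwise Fourier coefficient of `e^W` is the disc-counting
function `Φ(x, w) = c_w e^{−⟨x,w⟩}`, so the inverse SYZ mirror transformation of
`e^W` is `Φ`. -/
theorem stmt7 (n d : ℕ) (hn : 1 ≤ n) (hd : 1 ≤ d)
    (v : Fin d → Fin n → ℤ) (lam : Fin d → ℝ) (x : Fin n → ℝ) (w : Fin n → ℤ) :
    (∫ y in Set.Icc (0 : Fin n → ℝ) (fun _ => 2 * Real.pi),
      Complex.exp (∑ i, ((Real.exp (lam i) : ℝ) : ℂ) *
          ∏ j, (Complex.exp (-(x j : ℂ) - Complex.I * (y j : ℂ))) ^ (v i j)) *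
        Complex.exp (Complex.I * ((∑ j, y j * (w j : ℝ) : ℝ) : ℂ)))
      = (((2 * Real.pi) ^ n : ℝ) : ℂ) *
        (((∑' k : {k : Fin d → ℕ // ∑ i, k i • v i = w},
            Real.exp (∑ i, (k.1 i : ℝ) * lam i) /
              ∏ i, (Nat.factorial (k.1 i) : ℝ)) : ℝ) : ℂ) *
        ((Real.exp (-∑ j, x j * (w j : ℝ)) : ℝ) : ℂ) := by
  set b : Fin d → ℝ := fun i => Real.exp (lam i - ∑ j, x j * (v i j : ℝ)) with hb
  set B : (Fin d → ℕ) → ℝ := fun k => ∏ i, (b i ^ k i / (Nat.factorial (k i) : ℝ)) with hB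
  have hBpos : ∀ k, 0 ≤ B k := fun k => Finset.prod_nonneg fun i _ => by positivity
  have hBsum : Summable B := by
    refine (multi_exp_aux d (fun i => (b i : ℂ))).1.congr fun k => ?_
    rw [← abs_of_nonneg (hBpos k), ← Real.norm_eq_abs, ← Complex.norm_real]
    simp [hB]
  set M : (Fin d → ℕ) → Fin n → ℤ := fun k => w - ∑ i, k i • v i with hM
  have hterm : ∀ (y : Fin n → ℝ) (i : Fin d), ((Real.exp (lam i) : ℝ) : ℂ) *
      ∏ j, (Complex.exp (-(x j : ℂ) - Complex.I * (y j : ℂ))) ^ (v i j)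
      = (b i : ℂ) * Complex.exp (- (Complex.I * ∑ j, (y j : ℂ) * (v i j : ℂ))) := by
    intro y i
    simp_rw [← Complex.exp_int_mul, ← Complex.exp_sum, hb, Complex.ofReal_exp, ← Complex.exp_add]
    congr 1
    push_cast
    rw [sub_add, ← sub_neg_eq_add, sub_right_inj.symm.symm.eq]
    simp only [Finset.mul_sum, ← Finset.sum_neg_distrib, ← Finset.sum_sub_distrib]
    refine Finset.sum_congr rfl fun j _ => by ring
  have hF : ∀ (k : Fin d → ℕ) (y : Fin n → ℝ),
      (∏ i, (((b i : ℂ) * Complex.exp (- (Complex.I * ∑ j, (y j : ℂ) * (v i j : ℂ)))) ^ k i /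
        (Nat.factorial (k i) : ℂ))) *
        Complex.exp (Complex.I * ((∑ j, y j * (w j : ℝ) : ℝ) : ℂ))
      = (B k : ℂ) * Complex.exp (Complex.I * ∑ j, ((y j : ℂ) * (M k j : ℂ))) := by
    intro k y
    have : (∏ i, (((b i : ℂ) * Complex.exp (- (Complex.I * ∑ j, (y j : ℂ) * (v i j : ℂ)))) ^ k i /
        (Nat.factorial (k i) : ℂ)))
        = (B k : ℂ) * Complex.exp (∑ i, (k i : ℂ) *
            (- (Complex.I * ∑ j, (y j : ℂ) * (v i j : ℂ)))) := by
      rw [Complex.exp_sum, hB]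
      push_cast
      rw [← Finset.prod_mul_distrib]
      refine Finset.prod_congr rfl fun i _ => ?_
      rw [mul_pow, Complex.exp_nat_mul]; ring
    rw [this, mul_assoc, ← Complex.exp_add]
    congr 2
    simp only [hM, Pi.sub_apply, Finset.sum_apply, nsmul_eq_mul, Pi.mul_apply, Pi.natCast_apply]
    push_cast
    simp only [mul_sub, Finset.sum_sub_distrib, Finset.mul_sum, Finset.sum_neg_distrib, mul_neg]
    rw [Finset.sum_comm, neg_add_eq_sub]
    congr 1
    refine Finset.sum_congr rfl fun j _ => Finset.sum_congr rfl fun i _ => by ring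
  have hsum : HasSum (fun k => ∫ y in Set.Icc (0 : Fin n → ℝ) (fun _ => 2 * Real.pi),
      (B k : ℂ) * Complex.exp (Complex.I * ∑ j, ((y j : ℂ) * (M k j : ℂ))))
      (∫ y in Set.Icc (0 : Fin n → ℝ) (fun _ => 2 * Real.pi),
      Complex.exp (∑ i, ((Real.exp (lam i) : ℝ) : ℂ) *
          ∏ j, (Complex.exp (-(x j : ℂ) - Complex.I * (y j : ℂ))) ^ (v i j)) *
        Complex.exp (Complex.I * ((∑ j, y j * (w j : ℝ) : ℝ) : ℂ))) := by
    refine hasSum_integral_of_dominated_convergence (fun k _ => B k) ?_ ?_ ?_ ?_ ?_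
    · intro k
      exact Continuous.aestronglyMeasurable (by fun_prop)
    · intro k
      refine Filter.Eventually.of_forall fun y => ?_
      have : Complex.I * ∑ j, ((y j : ℂ) * (M k j : ℂ))
          = ((∑ j, y j * (M k j : ℝ) : ℝ) : ℂ) * Complex.I := by
        push_cast; ring
      rw [norm_mul, this, Complex.norm_exp_ofReal_mul_I, Complex.norm_real, Real.norm_eq_abs,
        abs_of_nonneg (hBpos k), mul_one]
    · exact Filter.Eventually.of_forall fun _ => hBsum
    · have : IsFiniteMeasure ((volume : Measure (Fin n → ℝ)).restrict
          (Set.Icc (0 : Fin n → ℝ) (fun _ => 2 * Real.pi))) :=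
        ⟨by rw [Measure.restrict_apply_univ]; exact isCompact_Icc.measure_lt_top⟩
      exact integrable_const _
    · refine Filter.Eventually.of_forall fun y => ?_
      simp_rw [← hF, hterm]
      exact (multi_exp_aux d _).2.mul_right _
  rw [← hsum.tsum_eq]
  simp_rw [integral_const_mul, multi_dim_aux]
  have hMz : ∀ k, M k = 0 ↔ ∑ i, k i • v i = w := fun k => by
    rw [hM, sub_eq_zero]; exact eq_comm
  have hBk : ∀ k : Fin d → ℕ, ∑ i, k i • v i = w →
      B k = (Real.exp (∑ i, (k i : ℝ) * lam i) / ∏ i, (Nat.factorial (k i) : ℝ)) *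
        Real.exp (-∑ j, x j * (w j : ℝ)) := by
    intro k hk
    rw [hB]
    simp only [Finset.prod_div_distrib, hb, ← Real.exp_nat_mul, ← Real.exp_sum]
    rw [div_mul_eq_mul_div, ← Real.exp_add]
    congr 2
    rw [← hk]
    simp only [Finset.sum_apply, nsmul_eq_mul, Pi.mul_apply, Pi.natCast_apply]
    push_cast
    simp only [mul_sub, Finset.sum_sub_distrib, Finset.mul_sum]
    rw [sub_eq_add_neg, Finset.sum_comm]
    congr 2
    refine Finset.sum_congr rfl fun j _ => Finset.sum_congr rfl fun i _ => by ring
  have hind : (fun k => (B k : ℂ) * if M k = 0 then (((2 * Real.pi) ^ n : ℝ) : ℂ) else 0)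
      = Set.indicator {k : Fin d → ℕ | ∑ i, k i • v i = w}
        (fun k => (((2 * Real.pi) ^ n : ℝ) : ℂ) *
          (((Real.exp (∑ i, (k i : ℝ) * lam i) / ∏ i, (Nat.factorial (k i) : ℝ) : ℝ) : ℂ)) *
          ((Real.exp (-∑ j, x j * (w j : ℝ)) : ℝ) : ℂ)) := by
    funext k
    by_cases h : ∑ i, k i • v i = w
    · rw [if_pos ((hMz k).2 h), Set.indicator_of_mem (by exact h), hBk k h, Complex.ofReal_mul]
      ring
    · rw [if_neg (fun h' => h ((hMz k).1 h')), Set.indicator_of_notMem (by exact h), mul_zero]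
  rw [hind, ← tsum_subtype, tsum_mul_right, tsum_mul_left, Complex.ofReal_tsum]
  rfl
end
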